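/- Let δ > 0, p ≥ 2, fix a model M₀ ∈ 𝓜, and set U_M = 4 σ² (δ+1) ν_r^{-2} ‖Ψ_M‖_F² ln p. For θ in the simplex Θ_𝓜 = {θ : θ_M ≥ 0 for all M ∈ 𝓜, Σ_{M∈𝓜} θ_M = 1}, define f̂_θ = Σ_{M∈𝓜} θ_M f̂_M and Δ₀(θ) = 2σ⟨ξ, f̂_θ − f̂_{M₀}⟩ + (σ²/ν_r²) ‖Ψ_{M₀}ᵀ ε‖² − (3/2) U_{M₀} − Σ_{M∈𝓜} θ_M U_M − (1/2) Σ_{M∈𝓜} θ_M ‖f̂_M − f̂_{M₀}‖². Then with probability at least 1 − √(2/π) p^{−δ}, Δ₀(θ) ≤ 0 holds simultaneously for all θ ∈ Θ_𝓜. -/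

import Mathlib

open MeasureTheory ProbabilityTheory Matrix Finset

noncomputable section

/-- Squared Euclidean norm of a vector in `ℝ^k`. -/
def sqnorm {k : ℕ} (v : Fin k → ℝ) : ℝ := ∑ i, v i ^ 2

/-- Euclidean inner product on `ℝ^k`. -/
def ip {k : ℕ} (u v : Fin k → ℝ) : ℝ := ∑ i, u i * v i

/-- The `j`-th column of a matrix. -/
def colv {a b : ℕ} (B : Matrix (Fin a) (Fin b) ℝ) (j : Fin b) : Fin a → ℝ := fun i => B i j

/-- The matrix `B_M`: the columns of `B` outside `M` are replaced by zero. -/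
def restr {a b : ℕ} (B : Matrix (Fin a) (Fin b) ℝ) (M : Finset (Fin b)) :
    Matrix (Fin a) (Fin b) ℝ := fun i j => if j ∈ M then B i j else 0

/-- Squared Frobenius norm of a matrix. -/
def frob2 {a b : ℕ} (B : Matrix (Fin a) (Fin b) ℝ) : ℝ := ∑ j, sqnorm (colv B j)

/-- `x` has at most `r` nonzero coordinates. -/
def sparse {k : ℕ} (r : ℕ) (x : Fin k → ℝ) : Prop := (Function.support x).ncard ≤ r

/-- `H` is the orthogonal projection matrix of `ℝ^m` onto `span{φ_j : j ∈ M}`: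
symmetric, idempotent, with range equal to the span of the columns of `Φ` indexed by `M`. -/
def IsProjOnto {m p : ℕ} (Φ : Matrix (Fin m) (Fin p) ℝ) (M : Finset (Fin p))
    (H : Matrix (Fin m) (Fin m) ℝ) : Prop :=
  H.IsSymm ∧ H * H = H ∧
    LinearMap.range H.mulVecLin = Submodule.span ℝ (colv Φ '' (M : Set (Fin p)))

/-- `Ψ = A (AᵀA)⁻¹ Φ`. -/
def Psi {n m p : ℕ} (A : Matrix (Fin n) (Fin m) ℝ) (Φ : Matrix (Fin m) (Fin p) ℝ) :
    Matrix (Fin n) (Fin p) ℝ := A * (Aᵀ * A)⁻¹ * Φ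

/-- `z = (AᵀA)⁻¹ Aᵀ y` where `y = A f + σ e`. -/
def zv {n m : ℕ} (A : Matrix (Fin n) (Fin m) ℝ) (f : Fin m → ℝ) (σ : ℝ) (e : Fin n → ℝ) :
    Fin m → ℝ := ((Aᵀ * A)⁻¹ * Aᵀ).mulVec (A.mulVec f + σ • e)

/-- `ξ = (AᵀA)⁻¹ Aᵀ e`. -/
def xiv {n m : ℕ} (A : Matrix (Fin n) (Fin m) ℝ) (e : Fin n → ℝ) : Fin m → ℝ :=
  ((Aᵀ * A)⁻¹ * Aᵀ).mulVec e

/-- The collection `𝓜` of models of size at most `r/2`. -/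
def models (p r : ℕ) : Finset (Finset (Fin p)) := Finset.univ.filter fun M => 2 * M.card ≤ r

open scoped Classical in
/-- The restricted collection `𝓜_γ = {M ∈ 𝓜 : ‖Ψ_M‖_F² ≤ γ²n}`. -/
def modelsG {n m p : ℕ} (r : ℕ) (A : Matrix (Fin n) (Fin m) ℝ) (Φ : Matrix (Fin m) (Fin p) ℝ)
    (γ : ℝ) : Finset (Finset (Fin p)) :=
  Finset.univ.filter fun M => 2 * M.card ≤ r ∧ frob2 (restr (Psi A Φ) M) ≤ γ ^ 2 * (n : ℝ)

/-- The aggregated estimator `f̂_θ = ∑_{M ∈ C} θ_M f̂_M`, where `f̂_M = H_M z`. -/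
def aggEst {m p : ℕ} (C : Finset (Finset (Fin p)))
    (H : Finset (Fin p) → Matrix (Fin m) (Fin m) ℝ) (zvec : Fin m → ℝ)
    (θ : Finset (Fin p) → ℝ) : Fin m → ℝ :=
  ∑ M ∈ C, θ M • (H M).mulVec zvec

/-- The penalty `U_M = 4σ²(δ+1)ν_r⁻² ‖Ψ_M‖_F² ln p`. -/
def Ufun {n m p : ℕ} (A : Matrix (Fin n) (Fin m) ℝ) (Φ : Matrix (Fin m) (Fin p) ℝ)
    (σ δ ν2 : ℝ) (M : Finset (Fin p)) : ℝ :=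
  4 * σ ^ 2 * (δ + 1) / ν2 * frob2 (restr (Psi A Φ) M) * Real.log p

/-- The Q-aggregation criterion (with `α = 1/2`, multiplied by 2):
`∑_M θ_M (‖z - f̂_M‖² + 2U_M) + ‖z - f̂_θ‖²`. -/
def aggCrit {m p : ℕ} (C : Finset (Finset (Fin p)))
    (H : Finset (Fin p) → Matrix (Fin m) (Fin m) ℝ) (zvec : Fin m → ℝ)
    (U : Finset (Fin p) → ℝ) (θ : Finset (Fin p) → ℝ) : ℝ :=
  ∑ M ∈ C, θ M * (sqnorm (zvec - (H M).mulVec zvec) + 2 * U M) +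
    sqnorm (zvec - aggEst C H zvec θ)

theorem gauss_lin {n : ℕ} (c : Fin n → ℝ) (hc : ∑ i, c i ^ 2 = 1) :
    (Measure.pi fun _ : Fin n => gaussianReal 0 1).map (fun x => ∑ i, c i * x i)
      = gaussianReal 0 1 := by
  have hm : Measurable (fun x : Fin n → ℝ => ∑ i, c i * x i) := by fun_prop
  have : IsProbabilityMeasure ((Measure.pi fun _ : Fin n => gaussianReal 0 1).map
    (fun x => ∑ i, c i * x i)) := Measure.isProbabilityMeasure_map hm.aemeasurable
  apply Measure.ext_of_charFun
  ext t
  rw [charFun_gaussianReal, charFun_apply_real, integral_map hm.aemeasurable (by fun_prop)]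
  have h1 : ∀ x : Fin n → ℝ,
      Complex.exp (t * ((∑ i, c i * x i : ℝ) : ℂ) * Complex.I)
        = ∏ i, Complex.exp (((t * c i : ℝ) : ℂ) * (x i : ℂ) * Complex.I) := by
    intro x
    rw [← Complex.exp_sum]
    congr 1
    push_cast
    rw [Finset.mul_sum, Finset.sum_mul]
    exact Finset.sum_congr rfl fun i _ => by ring
  simp_rw [h1]
  rw [integral_fintype_prod_eq_prod (𝕜 := ℂ)
    (f := fun (i : Fin n) (y : ℝ) => Complex.exp (((t * c i : ℝ) : ℂ) * (y : ℂ) * Complex.I))]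
  simp_rw [← charFun_apply_real, charFun_gaussianReal]
  rw [← Complex.exp_sum]
  congr 1
  have hc' : ∑ i, (c i : ℂ) ^ 2 = 1 := by exact_mod_cast hc
  have : ∀ i, (((t * c i : ℝ) : ℂ) * ((0:ℝ):ℂ) * Complex.I - ((1:NNReal):ℂ) * ((t * c i : ℝ) : ℂ) ^ 2 / 2)
      = (c i : ℂ) ^ 2 * (-(t:ℂ)^2/2) := by
    intro i; push_cast; ring
  have e := Finset.sum_congr (rfl : (univ : Finset (Fin n)) = univ) (fun i _ => this i)
  rw [← Finset.sum_mul, hc'] at e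
  refine Eq.trans e ?_
  push_cast; ring

theorem gauss_tail (t : ℝ) (ht : 1 ≤ t) :
    gaussianReal 0 1 {x | t < |x|} ≤ ENNReal.ofReal (Real.sqrt (2 / Real.pi) * Real.exp (-t ^ 2 / 2)) := by
  set K : ℝ := (Real.sqrt (2 * Real.pi))⁻¹ with hK
  have hK0 : 0 ≤ K := by positivity
  have key : gaussianReal 0 1 (Set.Ioi t) ≤ ENNReal.ofReal (K * Real.exp (-t ^ 2 / 2)) := by
    rw [gaussianReal_apply_eq_integral _ one_ne_zero]
    apply ENNReal.ofReal_le_ofReal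
    have hd : ∀ x ∈ Set.Ici t, HasDerivAt (fun x => -(K * Real.exp (-x ^ 2 / 2)))
        (K * (x * Real.exp (-x ^ 2 / 2))) x := by
      intro x _
      have h0 : HasDerivAt (fun x : ℝ => -x ^ 2 / 2) (-x) x := by
        have := ((hasDerivAt_pow 2 x).neg).div_const 2
        convert! this using 1
        simp
        ring
      convert! (h0.exp.const_mul K).neg using 1
      ring
    have hpos : ∀ x ∈ Set.Ioi t, 0 ≤ K * (x * Real.exp (-x ^ 2 / 2)) := by
      intro x hx
      have : 0 ≤ x := by have := hx.out; linarith
      positivity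
    have hlim : Filter.Tendsto (fun x : ℝ => -(K * Real.exp (-x ^ 2 / 2))) Filter.atTop (nhds 0) := by
      have h2 : Filter.Tendsto (fun x : ℝ => x ^ 2 / 2) Filter.atTop Filter.atTop :=
        (Filter.tendsto_pow_atTop two_ne_zero).atTop_div_const two_pos
      have h3 := (Real.tendsto_exp_neg_atTop_nhds_zero.comp h2).const_mul K |>.neg
      simp only [mul_zero, neg_zero] at h3
      refine h3.congr fun x => ?_
      simp [neg_div]
    have hint := integrableOn_Ioi_deriv_of_nonneg' hd hpos hlim
    have hval := integral_Ioi_of_hasDerivAt_of_tendsto' hd hint hlim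
    have : ∫ x in Set.Ioi t, gaussianPDFReal 0 1 x ≤ ∫ x in Set.Ioi t, K * (x * Real.exp (-x ^ 2 / 2)) := by
      apply setIntegral_mono_on (integrable_gaussianPDFReal 0 1).integrableOn hint measurableSet_Ioi
      intro x hx
      have hx1 : 1 ≤ x := le_trans ht (le_of_lt hx.out)
      rw [gaussianPDFReal]
      simp only [NNReal.coe_one, mul_one, sub_zero]
      rw [← hK]
      apply mul_le_mul_of_nonneg_left _ hK0
      exact le_mul_of_one_le_left (Real.exp_pos _).le hx1
    rw [hval] at this
    linarith
  have key2 : gaussianReal 0 1 (Set.Iio (-t)) = gaussianReal 0 1 (Set.Ioi t) := by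
    have h : (gaussianReal 0 1).map (fun x => -x) = gaussianReal 0 1 := by
      rw [gaussianReal_map_neg, neg_zero]
    conv_lhs => rw [← h]
    rw [Measure.map_apply measurable_neg measurableSet_Iio]
    congr 1
    ext x; simp
  have hset : {x : ℝ | t < |x|} = Set.Ioi t ∪ Set.Iio (-t) := by
    ext x; simp only [Set.mem_ofPred_eq, Set.mem_union, Set.mem_Ioi, Set.mem_Iio, lt_abs, lt_neg]
  rw [hset]
  refine (measure_union_le _ _).trans ?_
  rw [key2]
  refine (add_le_add key key).trans ?_
  rw [← ENNReal.ofReal_add (by positivity) (by positivity)]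
  apply ENNReal.ofReal_le_ofReal
  have : Real.sqrt (2 / Real.pi) = 2 * K := by
    rw [hK, Real.sqrt_div (by norm_num), Real.sqrt_mul (by norm_num)]
    have h2 : Real.sqrt 2 * Real.sqrt 2 = 2 := Real.mul_self_sqrt (by norm_num)
    have : 0 < Real.sqrt Real.pi := Real.sqrt_pos.mpr Real.pi_pos
    field_simp
    nlinarith
  rw [this]
  linarith

theorem tail_lin {n : ℕ} (ψ : Fin n → ℝ) (s : ℝ) (hs : 1 ≤ s)
    {Ω : Type*} [MeasurableSpace Ω] (μ : Measure Ω)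
    (ε : Ω → Fin n → ℝ) (hεmeas : Measurable ε)
    (hεdist : Measure.map ε μ = Measure.pi fun _ : Fin n => gaussianReal 0 1) :
    μ {ω | s ^ 2 * sqnorm ψ < (ip ψ (ε ω)) ^ 2} ≤
      ENNReal.ofReal (Real.sqrt (2 / Real.pi) * Real.exp (-s ^ 2 / 2)) := by
  have hN0 : 0 ≤ sqnorm ψ := Finset.sum_nonneg fun i _ => sq_nonneg _
  rcases hN0.eq_or_lt with h0 | hN
  · have hz : ∀ i, ψ i = 0 := by
      intro i
      have := (Finset.sum_eq_zero_iff_of_nonneg (fun i _ => sq_nonneg (ψ i))).1 h0.symm i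
        (Finset.mem_univ i)
      exact pow_eq_zero_iff two_ne_zero |>.1 this
    have : {ω | s ^ 2 * sqnorm ψ < (ip ψ (ε ω)) ^ 2} = ∅ := by
      ext ω
      simp [← h0, ip, hz]
    rw [this]; simp
  · set N := Real.sqrt (sqnorm ψ) with hNdef
    have hNpos : 0 < N := Real.sqrt_pos.2 hN
    have hNsq : N ^ 2 = sqnorm ψ := Real.sq_sqrt hN0
    have hc : ∑ i, (ψ i / N) ^ 2 = 1 := by
      simp_rw [div_pow]
      rw [← Finset.sum_div, hNsq]
      exact div_self hN.ne'
    have hl := gauss_lin (fun i => ψ i / N) hc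
    have hm : Measurable (fun x : Fin n → ℝ => ∑ i, ψ i / N * x i) := by fun_prop
    have hset : {ω | s ^ 2 * sqnorm ψ < (ip ψ (ε ω)) ^ 2} =
        ε ⁻¹' ((fun x : Fin n → ℝ => ∑ i, ψ i / N * x i) ⁻¹' {x | s < |x|}) := by
      ext ω
      simp only [Set.mem_preimage, Set.mem_ofPred_eq]
      have e : ∑ i, ψ i / N * ε ω i = ip ψ (ε ω) / N := by
        rw [ip, Finset.sum_div]
        exact Finset.sum_congr rfl fun i _ => by ring
      rw [e, ← hNsq, ← mul_pow, sq_lt_sq, abs_div, abs_of_pos hNpos, lt_div_iff₀ hNpos,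
        abs_of_pos (by positivity : 0 < s * N)]
    have hms : MeasurableSet {x : ℝ | s < |x|} :=
      measurableSet_lt measurable_const (by fun_prop)
    rw [hset, ← Measure.map_apply hεmeas (hm hms), hεdist, ← Measure.map_apply hm hms, hl]
    exact gauss_tail s hs

theorem proj_exists {m p : ℕ} {Φ : Matrix (Fin m) (Fin p) ℝ} {M : Finset (Fin p)}
    {H : Matrix (Fin m) (Fin m) ℝ} (hH : IsProjOnto Φ M H) (z : Fin m → ℝ) :
    ∃ x : Fin p → ℝ, (∀ j, j ∉ M → x j = 0) ∧ H.mulVec z = Φ.mulVec x := by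
  have h1 : H.mulVec z ∈ LinearMap.range H.mulVecLin := ⟨z, rfl⟩
  rw [hH.2.2] at h1
  generalize H.mulVec z = v at h1
  induction h1 using Submodule.span_induction with
  | mem v hv =>
    obtain ⟨j, hj, rfl⟩ := hv
    refine ⟨Pi.single j 1, ?_, ?_⟩
    · intro k hk
      have : k ≠ j := by rintro rfl; exact hk hj
      simp [this]
    · ext i
      simp [colv]
  | zero => exact ⟨0, by simp, by simp⟩
  | add u v _ _ hu hv =>
    obtain ⟨x, hx, rfl⟩ := hu
    obtain ⟨y, hy, rfl⟩ := hv
    exact ⟨x + y, fun j hj => by simp [hx j hj, hy j hj], by rw [Matrix.mulVec_add]⟩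
  | smul a v _ hv =>
    obtain ⟨x, hx, rfl⟩ := hv
    exact ⟨a • x, fun j hj => by simp [hx j hj], by rw [Matrix.mulVec_smul]⟩

theorem frob2_restr {a b : ℕ} (B : Matrix (Fin a) (Fin b) ℝ) (M : Finset (Fin b)) :
    frob2 (restr B M) = ∑ j ∈ M, sqnorm (colv B j) := by
  unfold frob2
  rw [← Finset.sum_filter_add_sum_filter_not Finset.univ (fun j => j ∈ M)]
  rw [Finset.sum_eq_zero (s := Finset.univ.filter fun j => j ∉ M), add_zero]
  · rw [Finset.filter_mem_eq_inter, Finset.univ_inter]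
    refine Finset.sum_congr rfl fun j hj => ?_
    simp [sqnorm, colv, restr, hj]
  · intro j hj
    simp at hj
    simp [sqnorm, colv, restr, hj]

theorem sqnorm_restr {a b : ℕ} (B : Matrix (Fin a) (Fin b) ℝ) (M : Finset (Fin b))
    (e : Fin a → ℝ) :
    sqnorm ((restr B M)ᵀ.mulVec e) = ∑ j ∈ M, (ip (colv B j) e) ^ 2 := by
  unfold sqnorm
  rw [← Finset.sum_filter_add_sum_filter_not Finset.univ (fun j => j ∈ M)]
  rw [Finset.sum_eq_zero (s := Finset.univ.filter fun j => j ∉ M), add_zero]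
  · rw [Finset.filter_mem_eq_inter, Finset.univ_inter]
    refine Finset.sum_congr rfl fun j hj => ?_
    simp [ip, colv, restr, hj, Matrix.mulVec, dotProduct]
  · intro j hj
    simp at hj
    simp [restr, hj, Matrix.mulVec, dotProduct]

theorem ip_xiv {n m p : ℕ} (A : Matrix (Fin n) (Fin m) ℝ) (Φ : Matrix (Fin m) (Fin p) ℝ)
    (e : Fin n → ℝ) (x : Fin p → ℝ) :
    ip (xiv A e) (Φ.mulVec x) = ∑ j, ip (colv (Psi A Φ) j) e * x j := by
  have h1 : ip (xiv A e) (Φ.mulVec x) = (xiv A e) ⬝ᵥ (Φ.mulVec x) := rfl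
  have h2 : ∑ j, ip (colv (Psi A Φ) j) e * x j = ((Psi A Φ)ᵀ.mulVec e) ⬝ᵥ x := rfl
  rw [h1, h2, Matrix.dotProduct_mulVec, ← Matrix.mulVec_transpose, xiv, Matrix.mulVec_mulVec]
  congr 2
  rw [Psi, Matrix.transpose_mul, Matrix.transpose_mul, Matrix.transpose_nonsing_inv,
    Matrix.transpose_mul, Matrix.transpose_transpose]

theorem pair_bound {n m p r : ℕ}
    (A : Matrix (Fin n) (Fin m) ℝ) (Φ : Matrix (Fin m) (Fin p) ℝ) (σ ν2 : ℝ) (hν2 : 0 < ν2)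
    (hν2min : ∀ x : Fin p → ℝ, x ≠ 0 → sparse r x → ν2 * sqnorm x ≤ sqnorm (Φ.mulVec x))
    (H : Finset (Fin p) → Matrix (Fin m) (Fin m) ℝ)
    (hH : ∀ M : Finset (Fin p), IsProjOnto Φ M (H M)) (z : Fin m → ℝ) (e : Fin n → ℝ)
    (M M₀ : Finset (Fin p)) (hM : M ∈ models p r) (hM₀ : M₀ ∈ models p r) :
    2 * σ * ip (xiv A e) ((H M).mulVec z - (H M₀).mulVec z)
      - 1 / 2 * sqnorm ((H M).mulVec z - (H M₀).mulVec z) ≤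
    2 * σ ^ 2 / ν2 * (∑ j ∈ M, (ip (colv (Psi A Φ) j) e) ^ 2
      + ∑ j ∈ M₀, (ip (colv (Psi A Φ) j) e) ^ 2) := by
  obtain ⟨x, hx, hxe⟩ := proj_exists (hH M) z
  obtain ⟨y, hy, hye⟩ := proj_exists (hH M₀) z
  rw [hxe, hye, ← Matrix.mulVec_sub, ip_xiv]
  set w : Fin p → ℝ := fun j => ip (colv (Psi A Φ) j) e with hw
  have hu : ∀ j, j ∉ M ∪ M₀ → (x - y) j = 0 := by
    intro j hj
    simp only [Finset.mem_union, not_or] at hj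
    simp [hx j hj.1, hy j hj.2]
  generalize x - y = u at hu
  have hsp : sparse r u := by
    unfold sparse
    have hsub : Function.support u ⊆ ((M ∪ M₀ : Finset (Fin p)) : Set (Fin p)) := by
      intro j hj
      by_contra h
      exact hj (hu j h)
    have h1 := Set.ncard_le_ncard hsub (Finset.finite_toSet _)
    rw [Set.ncard_coe_finset] at h1
    have h2 := Finset.card_union_le M M₀
    simp only [models, Finset.mem_filter, Finset.mem_univ, true_and] at hM hM₀
    omega
  have hν : ν2 * sqnorm u ≤ sqnorm (Φ.mulVec u) := by
    by_cases h0 : u = 0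
    · subst h0; simp [sqnorm]
    · exact hν2min u h0 hsp
  have hsum1 : ∑ j, w j * u j = ∑ j ∈ M ∪ M₀, w j * u j := by
    symm
    apply Finset.sum_subset (Finset.subset_univ _)
    intro j _ hj
    rw [hu j hj, mul_zero]
  have hsum2 : sqnorm u = ∑ j ∈ M ∪ M₀, u j ^ 2 := by
    symm
    apply Finset.sum_subset (Finset.subset_univ _)
    intro j _ hj
    rw [hu j hj]; norm_num
  have hun : ∑ j ∈ M ∪ M₀, w j ^ 2 ≤ ∑ j ∈ M, w j ^ 2 + ∑ j ∈ M₀, w j ^ 2 := by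
    rw [← Finset.sum_union_inter]
    have : 0 ≤ ∑ j ∈ M ∩ M₀, w j ^ 2 := Finset.sum_nonneg fun _ _ => sq_nonneg _
    linarith
  have ham : 2 * σ * ∑ j ∈ M ∪ M₀, w j * u j ≤
      2 * σ ^ 2 / ν2 * ∑ j ∈ M ∪ M₀, w j ^ 2 + ν2 / 2 * ∑ j ∈ M ∪ M₀, u j ^ 2 := by
    rw [Finset.mul_sum, Finset.mul_sum, Finset.mul_sum, ← Finset.sum_add_distrib]
    refine Finset.sum_le_sum fun j _ => ?_
    have : 2 * σ ^ 2 / ν2 * w j ^ 2 + ν2 / 2 * u j ^ 2 - 2 * σ * (w j * u j)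
        = (2 * σ * w j - ν2 * u j) ^ 2 / (2 * ν2) := by
      field_simp
      ring
    have h2 : 0 ≤ (2 * σ * w j - ν2 * u j) ^ 2 / (2 * ν2) := by positivity
    linarith
  have hm := mul_le_mul_of_nonneg_left hun (by positivity : 0 ≤ 2 * σ ^ 2 / ν2)
  change 2 * σ * ∑ j, w j * u j - _ ≤ _
  rw [hsum1]
  rw [hsum2] at hν
  linarith

/-- Lemma 4, first part: with probability at least `1 - √(2/π) p^{-δ}`, `Δ₀(θ) ≤ 0`
simultaneously for all `θ` in the simplex `Θ_𝓜`. -/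
theorem lemma4_high_probability
    {n m p r : ℕ} (hp : 2 ≤ p) (hmn : m ≤ n)
    (A : Matrix (Fin n) (Fin m) ℝ) (hrank : A.rank = m)
    (Φ : Matrix (Fin m) (Fin p) ℝ) (hΦnorm : ∀ j, sqnorm (colv Φ j) = 1)
    (σ : ℝ) (hσ : 0 < σ) (δ : ℝ) (hδ : 0 < δ)
    (ν2 : ℝ) (hν2 : 0 < ν2)
    (hν2min : ∀ x : Fin p → ℝ, x ≠ 0 → sparse r x → ν2 * sqnorm x ≤ sqnorm (Φ.mulVec x))
    (H : Finset (Fin p) → Matrix (Fin m) (Fin m) ℝ)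
    (hH : ∀ M : Finset (Fin p), IsProjOnto Φ M (H M))
    {Ω : Type*} [MeasurableSpace Ω] (μ : Measure Ω) [IsProbabilityMeasure μ]
    (ε : Ω → Fin n → ℝ) (hεmeas : Measurable ε)
    (hεdist : Measure.map ε μ = Measure.pi fun _ : Fin n => gaussianReal 0 1)
    (f : Fin m → ℝ)
    (M₀ : Finset (Fin p)) (hM₀ : M₀ ∈ models p r) :
    ENNReal.ofReal (1 - Real.sqrt (2 / Real.pi) * (p : ℝ) ^ (-δ)) ≤
      μ {ω | ∀ θ : Finset (Fin p) → ℝ,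
        (∀ M ∈ models p r, 0 ≤ θ M) → (∑ M ∈ models p r, θ M = 1) →
        2 * σ * ip (xiv A (ε ω))
            (aggEst (models p r) H (zv A f σ (ε ω)) θ - (H M₀).mulVec (zv A f σ (ε ω))) +
          σ ^ 2 / ν2 * sqnorm ((restr (Psi A Φ) M₀)ᵀ.mulVec (ε ω)) -
          3 / 2 * Ufun A Φ σ δ ν2 M₀ -
          (∑ M ∈ models p r, θ M * Ufun A Φ σ δ ν2 M) -
          1 / 2 * ∑ M ∈ models p r,
            θ M * sqnorm ((H M).mulVec (zv A f σ (ε ω)) - (H M₀).mulVec (zv A f σ (ε ω)))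
          ≤ 0} := by
  set L : ℝ := Real.log p with hL
  have hp0 : (0 : ℝ) < p := by positivity
  have hL2 : Real.log 2 ≤ L := Real.log_le_log two_pos (by exact_mod_cast hp)
  have hLhalf : 1 / 2 ≤ L := by linarith [Real.log_two_gt_d9]
  set s : ℝ := Real.sqrt (2 * (δ + 1) * L) with hs
  have hs2 : s ^ 2 = 2 * (δ + 1) * L := Real.sq_sqrt (by positivity)
  have hs1 : 1 ≤ s := by
    rw [hs, Real.one_le_sqrt]
    nlinarith
  set G : Set Ω := {ω | ∀ j, (ip (colv (Psi A Φ) j) (ε ω)) ^ 2 ≤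
    s ^ 2 * sqnorm (colv (Psi A Φ) j)} with hG
  have hexp : (p : ℝ) * Real.exp (-s ^ 2 / 2) = (p : ℝ) ^ (-δ) := by
    rw [hs2, Real.rpow_def_of_pos hp0, ← hL]
    conv_lhs => rw [← Real.exp_log hp0, ← hL]
    rw [← Real.exp_add]
    congr 1
    ring
  have hipm : ∀ j, Measurable fun ω => (ip (colv (Psi A Φ) j) (ε ω)) ^ 2 := by
    intro j
    unfold ip
    fun_prop
  have hGm : MeasurableSet G := by
    have : G = ⋂ j, {ω | (ip (colv (Psi A Φ) j) (ε ω)) ^ 2 ≤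
        s ^ 2 * sqnorm (colv (Psi A Φ) j)} := by
      ext ω; simp [hG]
    rw [this]
    exact MeasurableSet.iInter fun j => measurableSet_le (hipm j) measurable_const
  have hGc : μ Gᶜ ≤ ENNReal.ofReal (Real.sqrt (2 / Real.pi) * (p : ℝ) ^ (-δ)) := by
    have hsub : Gᶜ ⊆ ⋃ j ∈ (Finset.univ : Finset (Fin p)),
        {ω | s ^ 2 * sqnorm (colv (Psi A Φ) j) < (ip (colv (Psi A Φ) j) (ε ω)) ^ 2} := by
      intro ω hω
      simpa [hG] using hω
    refine (measure_mono hsub).trans ((measure_biUnion_finset_le _ _).trans ?_)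
    refine (Finset.sum_le_sum fun j _ => tail_lin _ s hs1 μ ε hεmeas hεdist).trans ?_
    rw [Finset.sum_const, Finset.card_univ, Fintype.card_fin, nsmul_eq_mul,
      ← ENNReal.ofReal_natCast, ← ENNReal.ofReal_mul hp0.le]
    apply ENNReal.ofReal_le_ofReal
    rw [← hexp]
    apply le_of_eq
    ring
  have hGlow : ENNReal.ofReal (1 - Real.sqrt (2 / Real.pi) * (p : ℝ) ^ (-δ)) ≤ μ G := by
    rw [ENNReal.ofReal_sub _ (by positivity), ENNReal.ofReal_one]
    refine tsub_le_iff_right.2 ?_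
    calc (1 : ENNReal) = μ G + μ Gᶜ := by rw [measure_add_measure_compl hGm, measure_univ]
      _ ≤ _ := by gcongr
  refine hGlow.trans (measure_mono ?_)
  intro ω hω θ hθ hθ1
  have hω' : ∀ j, (ip (colv (Psi A Φ) j) (ε ω)) ^ 2 ≤
    s ^ 2 * sqnorm (colv (Psi A Φ) j) := hω
  set z := zv A f σ (ε ω) with hz
  have hW : ∀ M : Finset (Fin p), 2 * σ ^ 2 / ν2 * ∑ j ∈ M, (ip (colv (Psi A Φ) j) (ε ω)) ^ 2
      ≤ Ufun A Φ σ δ ν2 M := by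
    intro M
    have h1 : ∑ j ∈ M, (ip (colv (Psi A Φ) j) (ε ω)) ^ 2 ≤
        s ^ 2 * ∑ j ∈ M, sqnorm (colv (Psi A Φ) j) := by
      rw [Finset.mul_sum]
      exact Finset.sum_le_sum fun j _ => hω' j
    have h2 := mul_le_mul_of_nonneg_left h1 (by positivity : 0 ≤ 2 * σ ^ 2 / ν2)
    refine h2.trans (le_of_eq ?_)
    rw [Ufun, frob2_restr, hs2, ← hL]
    ring
  have hd : ∀ M ∈ models p r,
      2 * σ * ip (xiv A (ε ω)) ((H M).mulVec z - (H M₀).mulVec z)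
      - 1 / 2 * sqnorm ((H M).mulVec z - (H M₀).mulVec z) ≤
      Ufun A Φ σ δ ν2 M + Ufun A Φ σ δ ν2 M₀ := by
    intro M hM
    have := pair_bound A Φ σ ν2 hν2 hν2min H hH z (ε ω) M M₀ hM hM₀
    have h1 := hW M
    have h2 := hW M₀
    linarith
  have hagg : ip (xiv A (ε ω)) (aggEst (models p r) H z θ - (H M₀).mulVec z) =
      ∑ M ∈ models p r, θ M * ip (xiv A (ε ω)) ((H M).mulVec z - (H M₀).mulVec z) := by
    have hip : ∀ u v : Fin m → ℝ, ip u v = u ⬝ᵥ v := fun _ _ => rfl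
    have e1 : aggEst (models p r) H z θ - (H M₀).mulVec z =
        ∑ M ∈ models p r, θ M • ((H M).mulVec z - (H M₀).mulVec z) := by
      simp_rw [smul_sub]
      rw [Finset.sum_sub_distrib, ← Finset.sum_smul, hθ1, one_smul, aggEst]
    rw [e1]
    simp_rw [hip]
    rw [dotProduct_sum]
    simp_rw [dotProduct_smul, smul_eq_mul]
  have hmain := Finset.sum_le_sum fun M hM => mul_le_mul_of_nonneg_left (hd M hM) (hθ M hM)
  simp_rw [mul_sub, mul_add] at hmain
  rw [Finset.sum_sub_distrib, Finset.sum_add_distrib, ← Finset.sum_mul, hθ1, one_mul] at hmain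
  rw [hagg, sqnorm_restr]
  have e2 : ∑ M ∈ models p r, θ M * (2 * σ * ip (xiv A (ε ω)) ((H M).mulVec z - (H M₀).mulVec z))
    = ∑ M ∈ models p r, 2 * σ * (θ M * ip (xiv A (ε ω)) ((H M).mulVec z - (H M₀).mulVec z)) :=
    Finset.sum_congr rfl fun M _ => by ring
  have e3 : ∑ M ∈ models p r, θ M * (1 / 2 * sqnorm ((H M).mulVec z - (H M₀).mulVec z))
    = ∑ M ∈ models p r, 1 / 2 * (θ M * sqnorm ((H M).mulVec z - (H M₀).mulVec z)) :=
    Finset.sum_congr rfl fun M _ => by ring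
  rw [e2, e3, ← Finset.mul_sum, ← Finset.mul_sum] at hmain
  have h0 := hW M₀
  have h0' : σ ^ 2 / ν2 * ∑ j ∈ M₀, (ip (colv (Psi A Φ) j) (ε ω)) ^ 2 ≤
      1 / 2 * Ufun A Φ σ δ ν2 M₀ := by
    have : 2 * σ ^ 2 / ν2 = 2 * (σ ^ 2 / ν2) := by ring
    rw [this] at h0
    linarith
  linarith
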